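/- Proposition 4.2 (convergence of the penalized correctors): Let d ≥ 2, assume W satisfies the double-well assumptions and let q be the standing wave. Fix a unit vector e ∈ ℝ^d with e ∉ ℝℤ^d. Let m̃₂ : ℝ × ℝ^d → ℝ be bounded, ℤ^d-periodic in its second argument, α-Hölder continuous for some α ∈ (0,1), and satisfy ∫_{[0,1]^d} m̃₂(s,y) dy = 0 for every s ∈ ℝ. For each δ > 0 let V^δ : ℝ × ℝ^d → ℝ be a bounded C² function, ℤ^d-periodic in its second argument, solving m̃₂(s,y) + δV^δ − (∂²_s V^δ + 2⟨e, D_y ∂_s V^δ⟩ + Δ_y V^δ) − (2q''(s)/q'(s)) (∂_s V^δ(s,y) + ⟨e, D_y V^δ(s,y)⟩) = 0 on ℝ × ℝ^d. Then sup_{(s,y) ∈ ℝ × ℝ^d} |δ V^δ(s,y)| → 0 as δ → 0⁺. Equivalently, the penalized correctors P^δ = V^δ(s,y) q'(s) satisfy sup |δ P^δ / q'| → 0. -/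

import Mathlib

open Set Filter Topology MeasureTheory RealInnerProductSpace

noncomputable section

abbrev Euc (d : ℕ) := EuclideanSpace ℝ (Fin d)

def IsIntVec {d : ℕ} (z : Euc d) : Prop := ∀ i, ∃ n : ℤ, z i = (n : ℝ)

/-- p ∈ ℝℤ^d, i.e. p is a real multiple of an integer vector. -/
def RatDir {d : ℕ} (p : Euc d) : Prop :=
  ∃ (c : ℝ) (k : Fin d → ℤ), ∀ i, p i = c * (k i : ℝ)

def unitCube (d : ℕ) : Set (Euc d) := {y | ∀ i, y i ∈ Set.Icc (0:ℝ) 1}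

noncomputable def clTrace {d : ℕ} (A : Euc d →L[ℝ] Euc d) : ℝ :=
  LinearMap.trace ℝ (Euc d) (A : Euc d →ₗ[ℝ] Euc d)

/-- ∂_s V (s,y). -/
noncomputable def dS {d : ℕ} (V : ℝ × Euc d → ℝ) (s : ℝ) (y : Euc d) : ℝ :=
  deriv (fun s' => V (s', y)) s

/-- ∂²_s V (s,y). -/
noncomputable def dSS {d : ℕ} (V : ℝ × Euc d → ℝ) (s : ℝ) (y : Euc d) : ℝ :=
  deriv (fun s' => deriv (fun s'' => V (s'', y)) s') s

/-- D_y V (s,y). -/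
noncomputable def gradY {d : ℕ} (V : ℝ × Euc d → ℝ) (s : ℝ) (y : Euc d) : Euc d :=
  gradient (fun y' => V (s, y')) y

/-- ⟨e, D_y ∂_s V⟩ (s,y). -/
noncomputable def mixedDeriv {d : ℕ} (e : Euc d) (V : ℝ × Euc d → ℝ) (s : ℝ) (y : Euc d) : ℝ :=
  ⟪e, gradient (fun y' => deriv (fun s' => V (s', y')) s) y⟫

/-- Δ_y V (s,y). -/
noncomputable def lapY {d : ℕ} (V : ℝ × Euc d → ℝ) (s : ℝ) (y : Euc d) : ℝ :=
  clTrace (fderiv ℝ (fun y' => gradient (fun z => V (s, z)) y') y)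

def DoubleWell (W : ℝ → ℝ) : Prop :=
  ContDiff ℝ 3 W ∧
  (∀ u ∈ Set.Icc (-1:ℝ) 1, 0 ≤ W u) ∧
  W (-1) = 0 ∧ W 1 = 0 ∧
  (∀ u ∈ Set.Ioo (-1:ℝ) 1, 0 < W u) ∧
  deriv W (-1) = 0 ∧ deriv W 0 = 0 ∧ deriv W 1 = 0 ∧
  (∀ u ∈ Set.Ioo (-1:ℝ) 0, 0 < deriv W u) ∧
  (∀ u ∈ Set.Ioo (0:ℝ) 1, deriv W u < 0) ∧
  0 < deriv (deriv W) (-1) ∧ 0 < deriv (deriv W) 1 ∧ deriv (deriv W) 0 < 0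

def StandingWave (W q : ℝ → ℝ) : Prop :=
  ContDiff ℝ 2 q ∧ StrictMono q ∧ (∀ s, q s ∈ Set.Ioo (-1:ℝ) 1) ∧ q 0 = 0 ∧
  (∀ s, deriv (deriv q) s = deriv W (q s)) ∧
  Filter.Tendsto q Filter.atTop (nhds 1) ∧ Filter.Tendsto q Filter.atBot (nhds (-1))

/-- `f` is differentiable, with first derivative `a` and second derivative `c` at the origin. -/
def HasJet (f : ℝ → ℝ) (a c : ℝ) : Prop :=
  ∃ f' : ℝ → ℝ, (∀ t, HasDerivAt f (f' t) t) ∧ f' 0 = a ∧ HasDerivAt f' c 0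

namespace HasJet

variable {f g : ℝ → ℝ} {a a' c c' : ℝ}

theorem add (hf : HasJet f a c) (hg : HasJet g a' c') :
    HasJet (fun t => f t + g t) (a + a') (c + c') := by
  obtain ⟨f', h1, rfl, h3⟩ := hf
  obtain ⟨g', k1, rfl, k3⟩ := hg
  exact ⟨fun t => f' t + g' t, fun t => (h1 t).add (k1 t), rfl, h3.add k3⟩

theorem const_mul (k : ℝ) (hf : HasJet f a c) :
    HasJet (fun t => k * f t) (k * a) (k * c) := by
  obtain ⟨f', h1, rfl, h3⟩ := hf
  exact ⟨fun t => k * f' t, fun t => (h1 t).const_mul k, rfl, h3.const_mul k⟩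

theorem sub (hf : HasJet f a c) (hg : HasJet g a' c') :
    HasJet (fun t => f t - g t) (a - a') (c - c') := by
  obtain ⟨f', h1, rfl, h3⟩ := hf
  obtain ⟨g', k1, rfl, k3⟩ := hg
  exact ⟨fun t => f' t - g' t, fun t => (h1 t).sub (k1 t), rfl, h3.sub k3⟩

theorem comp_neg (hf : HasJet f a c) : HasJet (fun t => f (-t)) (-a) c := by
  obtain ⟨f', h1, rfl, h3⟩ := hf
  refine ⟨fun t => -f' (-t), fun t => ?_, by simp, ?_⟩
  · exact ((h1 (-t)).comp t (hasDerivAt_neg t)).congr_deriv (by simp)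
  · have h4 : HasDerivAt f' c (-0) := by simpa using h3
    exact (h4.comp (0 : ℝ) (hasDerivAt_neg 0)).neg.congr_deriv (by simp)

theorem const (k : ℝ) : HasJet (fun _ => k) 0 0 :=
  ⟨fun _ => 0, fun t => hasDerivAt_const t k, rfl, hasDerivAt_const 0 0⟩

theorem eq_zero_and_nonpos_of_isLocalMax (hf : HasJet f a c) (h : IsLocalMax f 0) :
    a = 0 ∧ c ≤ 0 := by
  obtain ⟨f', h1, rfl, h3⟩ := hf
  have h0 : f' 0 = 0 := h.hasDerivAt_eq_zero (h1 0)
  refine ⟨h0, ?_⟩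
  by_contra! hc
  have hd : deriv f = f' := funext fun t => (h1 t).deriv
  have hmin : IsLocalMin f 0 := isLocalMin_of_deriv_deriv_pos (by rwa [hd, h3.deriv])
    (by rw [hd, h0]) (h1 0).continuousAt
  have hconst : f =ᶠ[𝓝 0] fun _ => f 0 := by
    filter_upwards [h, hmin] with t h1 h2 using le_antisymm h1 h2
  have hd2 : f' =ᶠ[𝓝 0] fun _ => 0 := by
    have := hconst.deriv
    rw [hd] at this
    simpa using this
  have := hd2.deriv_eq
  rw [h3.deriv] at this
  simp at this
  linarith

theorem quadratic (x y z : ℝ) : HasJet (fun t => x + y * t + z * t ^ 2) y (2 * z) := by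
  refine ⟨fun t => y + z * (2 * t), fun t => ?_, by simp, ?_⟩
  · have := (((hasDerivAt_id t).const_mul y).const_add x).add (((hasDerivAt_id t).pow 2).const_mul z)
    exact this.congr_deriv (by simp)
  · have := (((hasDerivAt_id (0 : ℝ)).const_mul 2).const_mul z).const_add y
    exact this.congr_deriv (by ring)

theorem exp_barrier (k σ r : ℝ) :
    HasJet (fun t => k * (1 - Real.exp (-(σ * (r + t))))) (k * σ * Real.exp (-(σ * r)))
      (-(k * σ ^ 2 * Real.exp (-(σ * r)))) := by
  have key : ∀ t, HasDerivAt (fun t => Real.exp (-(σ * (r + t))))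
      (Real.exp (-(σ * (r + t))) * (-σ)) t := by
    intro t
    have := ((((hasDerivAt_id t).const_add r).const_mul σ).neg).exp
    exact this.congr_deriv (by simp)
  refine ⟨fun t => k * (-(Real.exp (-(σ * (r + t))) * (-σ))), fun t => ?_, by simp; ring, ?_⟩
  · exact ((key t).const_sub 1).const_mul k
  · have := (((key 0).mul_const (-σ)).neg).const_mul k
    exact this.congr_deriv (by simp; ring)

end HasJet

theorem ContDiff.hasJet_line {E : Type*} [NormedAddCommGroup E] [NormedSpace ℝ E] {w : E → ℝ}
    (hw : ContDiff ℝ 2 w) (p v : E) :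
    HasJet (fun t : ℝ => w (p + t • v)) (fderiv ℝ w p v) (fderiv ℝ (fderiv ℝ w) p v v) := by
  have hline : ∀ t : ℝ, HasDerivAt (fun t : ℝ => p + t • v) v t := fun t => by
    simpa using ((hasDerivAt_id t).smul_const v).const_add p
  have hd : Differentiable ℝ (fderiv ℝ w) :=
    (hw.fderiv_right (m := 1) (by norm_num)).differentiable (by norm_num)
  refine ⟨fun t => fderiv ℝ w (p + t • v) v, fun t => ?_, by simp, ?_⟩
  · exact ((hw.differentiable (by norm_num)) _).hasFDerivAt.comp_hasDerivAt t (hline t)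
  · have h1 : HasFDerivAt (fderiv ℝ w) (fderiv ℝ (fderiv ℝ w) p) (p + (0 : ℝ) • v) := by
      simpa using (hd p).hasFDerivAt
    have h2 := h1.comp_hasDerivAt (0 : ℝ) (hline 0)
    exact h2.clm_apply (hasDerivAt_const 0 v) |>.congr_deriv (by simp)

/-- Weak maximum principle for a degenerate elliptic operator with zeroth order term, on the
region `0 ≤ ρ`, in the presence of a coercive function `χ` on which the operator is bounded. -/
theorem maximum_principle {F ι : Type*} [NormedAddCommGroup F] [NormedSpace ℝ F] [Fintype ι]
    (i₀ : ι) (v : ι → F) (β ρ χ w : F → ℝ) {δ K C : ℝ} (hδ : 0 < δ) (hC : 0 ≤ C)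
    (hρ : Continuous ρ) (hχc : Continuous χ) (hwc : Continuous w) (hχ0 : ∀ p, 0 ≤ χ p)
    (hχ : Tendsto χ (cocompact F) atTop)
    (hχL : ∀ p, ∃ a c : ι → ℝ, (∀ i, HasJet (fun t => χ (p + t • v i)) (a i) (c i)) ∧
      ∑ i, c i + β p * a i₀ ≤ C)
    (hwb : ∃ B, ∀ p, 0 ≤ ρ p → w p ≤ B)
    (hw0 : ∀ p, ρ p = 0 → δ * w p ≤ K)
    (hwL : ∀ p, 0 < ρ p → ∃ a c : ι → ℝ, (∀ i, HasJet (fun t => w (p + t • v i)) (a i) (c i)) ∧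
      δ * w p ≤ ∑ i, c i + β p * a i₀ + K)
    (p : F) (hp : 0 ≤ ρ p) : δ * w p ≤ K := by
  by_contra! hlt
  obtain ⟨B, hB⟩ := hwb
  set g := δ * w p - K with hg
  have hgpos : 0 < g := by linarith
  have hden : 0 < δ * χ p + C + 1 := by have := mul_nonneg hδ.le (hχ0 p); linarith
  set κ := g / (δ * χ p + C + 1) with hκ
  have hκpos : 0 < κ := div_pos hgpos hden
  have hκe : κ * (δ * χ p + C + 1) = g := div_mul_cancel₀ _ hden.ne'
  have hΦp : K + κ * C < δ * (w p - κ * χ p) := by nlinarith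
  obtain ⟨m, hm, hmax⟩ := ContinuousOn.exists_isMaxOn' (s := {x | 0 ≤ ρ x})
    (f := fun x => w x - κ * χ x) (x₀ := p)
    (hwc.sub (continuous_const.mul hχc)).continuousOn (isClosed_le continuous_const hρ) hp (by
      have h1 : ∀ᶠ x in cocompact F, (B - (w p - κ * χ p)) / κ ≤ χ x :=
        hχ.eventually_ge_atTop _
      rw [eventually_inf_principal]
      filter_upwards [h1] with x hx hxs
      have h2 := hB x hxs
      rw [div_le_iff₀ hκpos] at hx
      linarith)
  have hΦ : w p - κ * χ p ≤ w m - κ * χ m := hmax hp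
  have hΦm : K + κ * C < δ * (w m - κ * χ m) :=
    hΦp.trans_le (mul_le_mul_of_nonneg_left hΦ hδ.le)
  have hwm : K + κ * C < δ * w m := by
    have := mul_nonneg hδ.le (mul_nonneg hκpos.le (hχ0 m)); nlinarith
  have hρm : 0 < ρ m := by
    refine lt_of_le_of_ne hm fun h => ?_
    have := hw0 m h.symm
    have := mul_nonneg hκpos.le hC
    linarith
  have hloc : IsLocalMax (fun x => w x - κ * χ x) m :=
    hmax.isLocalMax (mem_of_superset (hρ.continuousAt.eventually (lt_mem_nhds hρm))
      fun x (hx : 0 < ρ x) => hx.le)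
  obtain ⟨a, c, hac, hle⟩ := hwL m hρm
  obtain ⟨a', c', hac', hle'⟩ := hχL m
  have key : ∀ i, a i - κ * a' i = 0 ∧ c i - κ * c' i ≤ 0 := fun i => by
    refine ((hac i).sub ((hac' i).const_mul κ)).eq_zero_and_nonpos_of_isLocalMax ?_
    have hcont : ContinuousAt (fun t : ℝ => m + t • v i) 0 := by fun_prop
    have hloc' : IsLocalMax (fun x => w x - κ * χ x) ((fun t : ℝ => m + t • v i) 0) := by
      simpa using hloc
    filter_upwards [hcont.eventually hloc'] with t ht
    simpa using ht
  have hsum : ∑ i, c i ≤ κ * ∑ i, c' i := by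
    rw [Finset.mul_sum]
    exact Finset.sum_le_sum fun i _ => by linarith [(key i).2]
  have ha : a i₀ = κ * a' i₀ := by linarith [(key i₀).1]
  rw [ha] at hle
  nlinarith [mul_le_mul_of_nonneg_left hle' hκpos.le]

section Comparison

variable {d : ℕ} (b : OrthonormalBasis (Fin d) ℝ (Euc d)) (i₀ : Fin d)

/-- The directions `(1, e)` and `(0, τ)`, for `e = b i₀` and `τ` another vector of the basis. -/
def charDir (i : Fin d) : ℝ × Euc d := (if i = i₀ then 1 else 0, b i)

/-- `w` is a bounded solution of `f + δ w - ∑ ∂²w - β ∂₁w = 0`, where the second derivatives are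
along the directions `charDir` and `∂₁` is the derivative in the direction `(1, b i₀)`. -/
structure IsSol (β : ℝ → ℝ) (δ : ℝ) (f w : ℝ × Euc d → ℝ) : Prop where
  bounded : ∃ B, ∀ p, |w p| ≤ B
  continuous : Continuous w
  eqn : ∀ p, ∃ a c : Fin d → ℝ, (∀ i, HasJet (fun t => w (p + t • charDir b i₀ i)) (a i) (c i)) ∧
    f p + δ * w p = ∑ i, c i + β p.1 * a i₀

namespace IsSol

variable {b i₀} {β : ℝ → ℝ} {δ : ℝ} {f g w u : ℝ × Euc d → ℝ}

theorem add (hw : IsSol b i₀ β δ f w) (hu : IsSol b i₀ β δ g u) :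
    IsSol b i₀ β δ (fun p => f p + g p) (fun p => w p + u p) := by
  obtain ⟨⟨B, hB⟩, h2, h3⟩ := hw
  obtain ⟨⟨B', hB'⟩, k2, k3⟩ := hu
  refine ⟨⟨B + B', fun p => (abs_add_le _ _).trans (add_le_add (hB p) (hB' p))⟩, h2.add k2,
    fun p => ?_⟩
  obtain ⟨a, c, h, he⟩ := h3 p
  obtain ⟨a', c', h', he'⟩ := k3 p
  refine ⟨fun i => a i + a' i, fun i => c i + c' i, fun i => (h i).add (h' i), ?_⟩
  rw [Finset.sum_add_distrib]
  linarith

theorem const_mul (k : ℝ) (hw : IsSol b i₀ β δ f w) :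
    IsSol b i₀ β δ (fun p => k * f p) (fun p => k * w p) := by
  obtain ⟨⟨B, hB⟩, h2, h3⟩ := hw
  refine ⟨⟨|k| * B, fun p => ?_⟩, continuous_const.mul h2, fun p => ?_⟩
  · rw [abs_mul]
    exact mul_le_mul_of_nonneg_left (hB p) (abs_nonneg k)
  obtain ⟨a, c, h, he⟩ := h3 p
  refine ⟨fun i => k * a i, fun i => k * c i, fun i => (h i).const_mul k, ?_⟩
  rw [← Finset.mul_sum]
  linear_combination k * he

theorem translate (z : Euc d) (hw : IsSol b i₀ β δ f w) :
    IsSol b i₀ β δ (fun p => f (p + (0, z))) (fun p => w (p + (0, z))) := by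
  obtain ⟨⟨B, hB⟩, h2, h3⟩ := hw
  refine ⟨⟨B, fun p => hB _⟩, h2.comp (continuous_id.add continuous_const), fun p => ?_⟩
  obtain ⟨a, c, h, he⟩ := h3 (p + (0, z))
  refine ⟨a, c, fun i => ?_, by simpa using he⟩
  simpa only [add_right_comm] using h i

end IsSol

/-- A coercive function on which the operators considered here are bounded. -/
def penalty (e : Euc d) (p : (ℝ × Euc d) × ℝ) : ℝ :=
  p.1.1 ^ 2 + ‖p.1.2 - p.1.1 • e‖ ^ 2 + p.2 ^ 2

theorem penalty_nonneg (e : Euc d) (p : (ℝ × Euc d) × ℝ) : 0 ≤ penalty e p := by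
  unfold penalty; positivity

theorem continuous_penalty (e : Euc d) : Continuous (penalty e) := by
  unfold penalty; fun_prop

theorem tendsto_penalty (e : Euc d) :
    Tendsto (penalty e) (cocompact ((ℝ × Euc d) × ℝ)) atTop := by
  have h1 : ∀ p, ‖p‖ ≤ (2 + ‖e‖) * (penalty e p + 1) := by
    rintro ⟨⟨s, y⟩, r⟩
    have hs : |s| ≤ penalty e ((s, y), r) + 1 := by
      simp only [penalty]
      nlinarith [sq_abs s, sq_nonneg (|s| - 1), sq_nonneg r, sq_nonneg ‖y - s • e‖, abs_nonneg s]
    have hr : |r| ≤ penalty e ((s, y), r) + 1 := by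
      simp only [penalty]
      nlinarith [sq_abs r, sq_nonneg (|r| - 1), sq_nonneg s, sq_nonneg ‖y - s • e‖, abs_nonneg r]
    have hx : ‖y - s • e‖ ≤ penalty e ((s, y), r) + 1 := by
      simp only [penalty]
      nlinarith [sq_nonneg (‖y - s • e‖ - 1), sq_nonneg s, sq_nonneg r, norm_nonneg (y - s • e)]
    have hy : ‖y‖ ≤ ‖y - s • e‖ + |s| * ‖e‖ := by
      simpa [norm_smul] using norm_add_le (y - s • e) (s • e)
    have he := norm_nonneg e
    have hp := penalty_nonneg e ((s, y), r)
    have hse := mul_le_mul_of_nonneg_right hs he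
    simp only [Prod.norm_def, Real.norm_eq_abs]
    refine max_le (max_le ?_ ?_) ?_ <;> nlinarith
  have hpos : 0 < 2 + ‖e‖ := by positivity
  have h2 : Tendsto (fun p : (ℝ × Euc d) × ℝ => (2 + ‖e‖)⁻¹ * ‖p‖ - 1) (cocompact _) atTop :=
    tendsto_atTop_add_const_right _ _ 
      (tendsto_norm_cocompact_atTop.const_mul_atTop (by positivity))
  refine tendsto_atTop_mono (fun p => ?_) h2
  have := h1 p
  rw [sub_le_iff_le_add, inv_mul_le_iff₀ hpos]
  exact this

theorem hasJet_penalty (e : Euc d) (p : (ℝ × Euc d) × ℝ) (σ θ : ℝ) (z : Euc d) :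
    HasJet (fun t => penalty e (p + t • ((σ, z), θ)))
      (2 * (p.1.1 * σ + ⟪p.1.2 - p.1.1 • e, z - σ • e⟫ + p.2 * θ))
      (2 * (σ ^ 2 + ‖z - σ • e‖ ^ 2 + θ ^ 2)) := by
  convert HasJet.quadratic (penalty e p)
    (2 * (p.1.1 * σ + ⟪p.1.2 - p.1.1 • e, z - σ • e⟫ + p.2 * θ))
    (σ ^ 2 + ‖z - σ • e‖ ^ 2 + θ ^ 2) using 2 with t
  obtain ⟨⟨s, y⟩, r⟩ := p
  have h : y + t • z - (s + t * σ) • e = (y - s • e) + t • (z - σ • e) := by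
    module
  simp only [penalty, Prod.fst_add, Prod.snd_add, Prod.smul_mk, smul_eq_mul, h]
  rw [norm_add_sq_real, inner_smul_right, norm_smul, mul_pow, Real.norm_eq_abs, sq_abs]
  ring

/-- The maximum principle for `charDir`, with an additional variable `r ≥ 0` possibly replacing
the direction `j`. -/
theorem charDir_maximum_principle {β : ℝ → ℝ} (hβ : ∀ s, s * β s ≤ 0) {δ K : ℝ} (hδ : 0 < δ)
    (dir : Fin d → (ℝ × Euc d) × ℝ)
    (hdir₀ : dir i₀ = (charDir b i₀ i₀, 0))
    (hdir : ∀ i, dir i = (charDir b i₀ i, 0) ∨ dir i = (0, 1))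
    {ρ w : (ℝ × Euc d) × ℝ → ℝ} (hρ : Continuous ρ) (hwc : Continuous w)
    (hwb : ∃ B, ∀ p, 0 ≤ ρ p → w p ≤ B)
    (hw0 : ∀ p, ρ p = 0 → δ * w p ≤ K)
    (hwL : ∀ p, 0 < ρ p → ∃ a c : Fin d → ℝ,
      (∀ i, HasJet (fun t => w (p + t • dir i)) (a i) (c i)) ∧
      δ * w p ≤ ∑ i, c i + β p.1.1 * a i₀ + K)
    (p : (ℝ × Euc d) × ℝ) (hp : 0 ≤ ρ p) : δ * w p ≤ K := by
  refine maximum_principle i₀ dir (fun p => β p.1.1) ρ (penalty (b i₀)) w hδ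
    (C := ∑ _i : Fin d, 2) (by positivity) hρ (continuous_penalty _) hwc (penalty_nonneg _)
    (tendsto_penalty _) (fun p => ?_) hwb hw0 hwL p hp
  refine ⟨_, _, fun i => hasJet_penalty (b i₀) p (dir i).1.1 (dir i).2 (dir i).1.2, ?_⟩
  have h1 : ∀ i, 2 * ((dir i).1.1 ^ 2 + ‖(dir i).1.2 - (dir i).1.1 • b i₀‖ ^ 2 + (dir i).2 ^ 2)
      ≤ 2 := by
    intro i
    rcases hdir i with h | h <;> rw [h]
    · by_cases hi : i = i₀
      · subst hi; simp [charDir]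
      · simp [charDir, hi]
    · simp
  have h2 : β p.1.1 * (2 * (p.1.1 * (dir i₀).1.1 +
      ⟪p.1.2 - p.1.1 • b i₀, (dir i₀).1.2 - (dir i₀).1.1 • b i₀⟫ + p.2 * (dir i₀).2)) ≤ 0 := by
    rw [hdir₀]
    have := hβ p.1.1
    simp [charDir]
    nlinarith
  have := Finset.sum_le_sum (s := Finset.univ) fun i _ => h1 i
  linarith

variable {b i₀}

theorem IsSol.mul_le {β : ℝ → ℝ} (hβ : ∀ s, s * β s ≤ 0) {δ K : ℝ} (hδ : 0 < δ)
    {f w : ℝ × Euc d → ℝ} (hw : IsSol b i₀ β δ f w) (hf : ∀ p, -f p ≤ K) (p : ℝ × Euc d) :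
    δ * w p ≤ K := by
  obtain ⟨⟨B, hB⟩, hc, heq⟩ := hw
  refine charDir_maximum_principle b i₀ hβ hδ (fun i => (charDir b i₀ i, 0)) rfl
    (fun i => Or.inl rfl) (ρ := fun _ => 1) (w := fun q => w q.1) continuous_const
    (hc.comp continuous_fst) ⟨B, fun q _ => (abs_le.1 (hB q.1)).2⟩ (by simp) (fun q _ => ?_)
    (p, 0) zero_le_one
  obtain ⟨a, c, h, he⟩ := heq q.1
  exact ⟨a, c, fun i => by simpa using h i, by linarith [hf q.1]⟩

/-- A bound on the right-hand side bounds `δ w`. -/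
theorem IsSol.abs_mul_le {β : ℝ → ℝ} (hβ : ∀ s, s * β s ≤ 0) {δ K : ℝ} (hδ : 0 < δ)
    {f w : ℝ × Euc d → ℝ} (hw : IsSol b i₀ β δ f w) (hf : ∀ p, |f p| ≤ K) (p : ℝ × Euc d) :
    |δ * w p| ≤ K := by
  rw [abs_le]
  constructor
  · have := (hw.const_mul (-1)).mul_le hβ hδ (K := K) (fun p => by linarith [(abs_le.1 (hf p)).2]) p
    linarith
  · exact hw.mul_le hβ hδ (fun p => by linarith [(abs_le.1 (hf p)).1]) p

/-- Reflection coupling: bounded solutions vary slowly in the directions orthogonal to `b i₀`. -/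
theorem IsSol.reflection_le {β : ℝ → ℝ} (hβ : ∀ s, s * β s ≤ 0) {δ K : ℝ} (hδ : 0 < δ)
    {f w : ℝ × Euc d → ℝ} (hw : IsSol b i₀ β δ f w) (hf : ∀ p, |f p| ≤ K)
    {j : Fin d} (hj : j ≠ i₀) (p : ℝ × Euc d) {r : ℝ} (hr : 0 ≤ r) :
    δ * (w (p + r • (0, b j)) - w (p - r • (0, b j))) ≤ 2 * K * (√δ * r) := by
  obtain ⟨⟨B, hB⟩, hc, heq⟩ := hw
  have hK : 0 ≤ K := (abs_nonneg _).trans (hf p)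
  set k := 2 * K / δ with hk
  have hk0 : 0 ≤ k := by positivity
  have hkδ : δ * k = 2 * K := by rw [hk]; field_simp
  set σ := √δ with hσ
  have hσ0 : 0 ≤ σ := Real.sqrt_nonneg δ
  have hσ2 : σ ^ 2 = δ := Real.sq_sqrt hδ.le
  have main : δ * ((w (p + r • (0, b j)) - w (p - r • (0, b j)))
      - k * (1 - Real.exp (-(σ * r)))) ≤ 0 := by
    refine charDir_maximum_principle b i₀ hβ hδ
      (fun i => if i = j then (0, 1) else (charDir b i₀ i, 0)) (by simp [hj.symm])
      (fun i => by by_cases h : i = j <;> simp [h]) (ρ := fun q => q.2)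
      (w := fun q => (w (q.1 + q.2 • (0, b j)) - w (q.1 - q.2 • (0, b j)))
        - k * (1 - Real.exp (-(σ * q.2)))) continuous_snd (by fun_prop)
      ⟨B + B, fun q hq => ?_⟩ (fun q hq => by simp [hq]) (fun q hq => ?_) (p, r) hr
    · have h1 := (abs_le.1 (hB (q.1 + q.2 • (0, b j)))).2
      have h2 := (abs_le.1 (hB (q.1 - q.2 • (0, b j)))).1
      have h3 : 0 ≤ k * (1 - Real.exp (-(σ * q.2))) := by
        refine mul_nonneg hk0 ?_
        have : Real.exp (-(σ * q.2)) ≤ 1 := Real.exp_le_one_iff.2 (by nlinarith)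
        linarith
      linarith
    · obtain ⟨x, r⟩ := q
      obtain ⟨a, c, h, he⟩ := heq (x + r • (0, b j))
      obtain ⟨a', c', h', he'⟩ := heq (x - r • (0, b j))
      have hcj : charDir b i₀ j = (0, b j) := by simp [charDir, hj]
      refine ⟨fun i => if i = j then (a j - -a' j) - k * σ * Real.exp (-(σ * r)) else a i - a' i,
        fun i => (c i - c' i) +
          if i = j then k * σ ^ 2 * Real.exp (-(σ * r)) else 0, fun i => ?_, ?_⟩
      · by_cases hi : i = j
        · subst hi
          simp only [if_true]
          convert (((h i).sub ((h' i).comp_neg)).sub (HasJet.exp_barrier k σ r)) using 1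
          · funext t
            simp only [hcj, Prod.fst_add, Prod.snd_add, Prod.smul_mk, smul_eq_mul, mul_one,
              smul_zero, add_zero]
            congr 3
            · ext <;> simp; ring
            · ext <;> simp; ring
          · ring
        · simp only [hi, if_false, add_zero]
          have h1 := ((h i).sub (h' i)).sub (HasJet.const (k * (1 - Real.exp (-(σ * r)))))
          simp only [sub_zero] at h1
          convert h1 using 1
          funext t
          simp [add_right_comm, sub_add_eq_add_sub]
      · rw [Finset.sum_add_distrib, Finset.sum_sub_distrib]
        simp only [Finset.sum_ite_eq', Finset.mem_univ, if_true, hj.symm, if_false]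
        have h1 := (abs_le.1 (hf (x + r • (0, b j)))).1
        have h2 := (abs_le.1 (hf (x - r • (0, b j)))).2
        simp only [Prod.fst_add, Prod.fst_sub, Prod.smul_mk, smul_zero, add_zero, sub_zero] at he he' ⊢
        rw [hσ2]
        simp only [Prod.smul_mk, smul_zero] at h1 h2
        nlinarith
  have hexp : 1 - Real.exp (-(σ * r)) ≤ σ * r := by
    linarith [Real.add_one_le_exp (-(σ * r))]
  have := mul_le_mul_of_nonneg_left hexp (by positivity : 0 ≤ 2 * K)
  rw [← hkδ] at this ⊢
  nlinarith

end Comparison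

theorem real_inner_gradient_right {E : Type*} [NormedAddCommGroup E] [InnerProductSpace ℝ E]
    [CompleteSpace E] (f : E → ℝ) (x v : E) : ⟪v, gradient f x⟫ = fderiv ℝ f x v := by
  rw [real_inner_comm, gradient, InnerProductSpace.toDual_symm_apply]

section Operator

variable {d : ℕ} {w : ℝ × Euc d → ℝ} (b : OrthonormalBasis (Fin d) ℝ (Euc d)) (i₀ : Fin d)

theorem hasDerivAt_fst_slice (hw : Differentiable ℝ w) (s : ℝ) (y : Euc d) :
    HasDerivAt (fun s' => w (s', y)) (fderiv ℝ w (s, y) (1, 0)) s :=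
  (hw (s, y)).hasFDerivAt.comp_hasDerivAt s ((hasDerivAt_id s).prodMk (hasDerivAt_const s y))

theorem hasFDerivAt_snd_slice {F : Type*} [NormedAddCommGroup F] [NormedSpace ℝ F]
    {g : ℝ × Euc d → F} (hg : Differentiable ℝ g) (s : ℝ) (y : Euc d) :
    HasFDerivAt (fun y' => g (s, y')) ((fderiv ℝ g (s, y)).comp (.inr ℝ ℝ (Euc d))) y :=
  (hg (s, y)).hasFDerivAt.comp y (hasFDerivAt_prodMk_right s y)

theorem dS_eq (hw : Differentiable ℝ w) (s : ℝ) (y : Euc d) :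
    dS w s y = fderiv ℝ w (s, y) (1, 0) :=
  (hasDerivAt_fst_slice hw s y).deriv

theorem fderiv_snd_slice (hw : Differentiable ℝ w) (s : ℝ) (y v : Euc d) :
    fderiv ℝ (fun y' => w (s, y')) y v = fderiv ℝ w (s, y) (0, v) := by
  simp [(hasFDerivAt_snd_slice hw s y).fderiv]

theorem transport_eq (hw : Differentiable ℝ w) (s : ℝ) (y : Euc d) :
    dS w s y + ⟪b i₀, gradY w s y⟫ = fderiv ℝ w (s, y) (charDir b i₀ i₀) := by
  rw [dS_eq hw, gradY, real_inner_gradient_right, fderiv_snd_slice hw, ← map_add]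
  simp [charDir]

theorem dSS_eq (hw : ContDiff ℝ 2 w) (s : ℝ) (y : Euc d) :
    dSS w s y = fderiv ℝ (fderiv ℝ w) (s, y) (1, 0) (1, 0) := by
  have h1 : Differentiable ℝ w := hw.differentiable (by norm_num)
  have h2 : Differentiable ℝ (fderiv ℝ w) :=
    (hw.fderiv_right (m := 1) (by norm_num)).differentiable (by norm_num)
  have h3 : (fun s' => deriv (fun s'' => w (s'', y)) s') = fun s' => fderiv ℝ w (s', y) (1, 0) :=
    funext fun s' => (hasDerivAt_fst_slice h1 s' y).deriv
  rw [dSS, h3]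
  have h4 : HasDerivAt (fun s' => fderiv ℝ w (s', y)) (fderiv ℝ (fderiv ℝ w) (s, y) (1, 0)) s :=
    (h2 (s, y)).hasFDerivAt.comp_hasDerivAt s ((hasDerivAt_id s).prodMk (hasDerivAt_const s y))
  have h5 := h4.clm_apply (hasDerivAt_const s ((1 : ℝ), (0 : Euc d)))
  rw [h5.deriv]
  simp

theorem mixedDeriv_eq (hw : ContDiff ℝ 2 w) (e : Euc d) (s : ℝ) (y : Euc d) :
    mixedDeriv e w s y = fderiv ℝ (fderiv ℝ w) (s, y) (0, e) (1, 0) := by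
  have h1 : Differentiable ℝ w := hw.differentiable (by norm_num)
  have h2 : Differentiable ℝ (fderiv ℝ w) :=
    (hw.fderiv_right (m := 1) (by norm_num)).differentiable (by norm_num)
  have h3 : (fun y' => deriv (fun s' => w (s', y')) s) = fun y' => fderiv ℝ w (s, y') (1, 0) :=
    funext fun y' => (hasDerivAt_fst_slice h1 s y').deriv
  rw [mixedDeriv, h3, real_inner_gradient_right]
  have h5 := (hasFDerivAt_snd_slice h2 s y).clm_apply
    (hasFDerivAt_const ((1 : ℝ), (0 : Euc d)) y)
  rw [h5.fderiv]
  simp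

theorem lapY_eq (hw : ContDiff ℝ 2 w) (s : ℝ) (y : Euc d) :
    lapY w s y = ∑ i, fderiv ℝ (fderiv ℝ w) (s, y) (0, b i) (0, b i) := by
  have h1 : Differentiable ℝ w := hw.differentiable (by norm_num)
  have h2 : Differentiable ℝ (fderiv ℝ w) :=
    (hw.fderiv_right (m := 1) (by norm_num)).differentiable (by norm_num)
  have h3 : (fun y' => gradient (fun z => w (s, z)) y') =
      fun y' => ∑ i, fderiv ℝ w (s, y') (0, b i) • b i := by
    funext y'
    rw [← b.sum_repr' (gradient (fun z => w (s, z)) y')]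
    exact Finset.sum_congr rfl fun i _ => by rw [real_inner_gradient_right, fderiv_snd_slice h1]
  have h4 := HasFDerivAt.fun_sum (u := Finset.univ) fun i _ =>
    ((hasFDerivAt_snd_slice h2 s y).clm_apply
      (hasFDerivAt_const ((0 : ℝ), b i) y)).smul_const (b i)
  rw [lapY, clTrace, h3, h4.fderiv, LinearMap.trace_eq_sum_inner _ b]
  refine Finset.sum_congr rfl fun i _ => ?_
  simp [inner_sum, inner_smul_right, b.inner_eq_ite]

theorem second_order_eq (hw : ContDiff ℝ 2 w) (s : ℝ) (y : Euc d) :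
    dSS w s y + 2 * mixedDeriv (b i₀) w s y + lapY w s y =
      ∑ i, fderiv ℝ (fderiv ℝ w) (s, y) (charDir b i₀ i) (charDir b i₀ i) := by
  have hsymm : IsSymmSndFDerivAt ℝ w (s, y) := hw.contDiffAt.isSymmSndFDerivAt (by simp)
  set D := fderiv ℝ (fderiv ℝ w) (s, y) with hD
  have h : ∀ i, D (charDir b i₀ i) (charDir b i₀ i) =
      (if i = i₀ then D (1, 0) (1, 0) + 2 * D (0, b i₀) (1, 0) else 0) +
        D (0, b i) (0, b i) := by
    intro i
    by_cases hi : i = i₀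
    · subst hi
      have hc : charDir b i i = (1, 0) + (0, b i) := by simp [charDir]
      have := hsymm.eq (1, 0) (0, b i)
      rw [← hD] at this
      simp only [hc, map_add, _root_.add_apply, if_true]
      linarith
    · simp [charDir, hi]
  rw [dSS_eq hw, mixedDeriv_eq hw, lapY_eq b hw]
  simp only [h, Finset.sum_add_distrib, Finset.sum_ite_eq', Finset.mem_univ, if_true, ← hD]

end Operator

section Averaging

variable {d : ℕ}

theorem unitCube_eq_parallelepiped :
    unitCube d = parallelepiped (EuclideanSpace.basisFun (Fin d) ℝ) := by
  ext x
  rw [mem_parallelepiped_iff]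
  constructor
  · intro hx
    refine ⟨fun i => x i, ⟨fun i => (hx i).1, fun i => (hx i).2⟩, ?_⟩
    ext i
    simp [Finset.sum_apply, Pi.single_apply]
  · rintro ⟨t, ht, rfl⟩ i
    simpa [Finset.sum_apply, Pi.single_apply] using ⟨ht.1 i, ht.2 i⟩

theorem volume_unitCube : volume (unitCube d) = 1 := by
  rw [unitCube_eq_parallelepiped]
  exact (EuclideanSpace.basisFun (Fin d) ℝ).volume_parallelepiped

theorem isCompact_unitCube : IsCompact (unitCube d) := by
  rw [unitCube_eq_parallelepiped, parallelepiped]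
  exact isCompact_Icc.image (by fun_prop)

open scoped Pointwise in
theorem setIntegral_unitCube_add (f : Euc d → ℝ)
    (hf : ∀ y z, IsIntVec z → f (y + z) = f y) (y : Euc d) :
    ∫ z in unitCube d, f (y + z) = ∫ z in unitCube d, f z := by
  set B := (EuclideanSpace.basisFun (Fin d) ℝ).toBasis with hB
  have hae : ZSpan.fundamentalDomain B =ᵐ[volume] unitCube d := by
    rw [unitCube_eq_parallelepiped]
    simpa [hB] using ZSpan.fundamentalDomain_ae_parallelepiped B volume
  have hdom := ZSpan.isAddFundamentalDomain' B (volume : Measure (Euc d))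
  have hint : ∀ g ∈ Submodule.span ℤ (range B), IsIntVec g := by
    intro g hg
    induction hg using Submodule.span_induction with
    | mem x hx =>
      obtain ⟨k, rfl⟩ := hx
      intro i
      refine ⟨if i = k then 1 else 0, ?_⟩
      by_cases h : i = k <;> simp [hB, h]
    | zero => exact fun i => ⟨0, by simp⟩
    | add x y _ _ hx hy =>
      intro i
      obtain ⟨m, hm⟩ := hx i
      obtain ⟨n, hn⟩ := hy i
      exact ⟨m + n, by simp [hm, hn]⟩
    | smul a x _ hx =>
      intro i
      obtain ⟨m, hm⟩ := hx i
      exact ⟨a * m, by simp [hm]⟩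
  rw [← setIntegral_congr_set hae, ← setIntegral_congr_set hae]
  have h1 : ∫ z in ZSpan.fundamentalDomain B, f (y + z) =
      ∫ z in (y +ᵥ ZSpan.fundamentalDomain B : Set (Euc d)), f z := by
    have := (measurePreserving_add_left (volume : Measure (Euc d)) y).setIntegral_image_emb
      (measurableEmbedding_addLeft y) f (ZSpan.fundamentalDomain B)
    exact this.symm
  rw [h1]
  have : Countable (Submodule.span ℤ (range B)).toAddSubgroup :=
    inferInstanceAs (Countable (Submodule.span ℤ (range B)))
  refine (hdom.vadd_of_comm y).setIntegral_eq hdom fun g x => ?_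
  rw [AddSubgroup.vadd_def, vadd_eq_add, add_comm]
  exact hf x g (hint g g.2)

theorem continuous_of_dist_le_rpow {X Y : Type*} [PseudoMetricSpace X] [PseudoMetricSpace Y]
    {f : X → Y} {C α : ℝ} (hα : 0 < α) (h : ∀ x x', dist (f x) (f x') ≤ C * dist x x' ^ α) :
    Continuous f := by
  refine continuous_iff_continuousAt.2 fun x => tendsto_iff_dist_tendsto_zero.2 ?_
  refine squeeze_zero (fun _ => dist_nonneg) (fun x' => h x' x) ?_
  have h1 : Continuous fun x' => C * dist x' x ^ α :=
    continuous_const.mul ((continuous_id.dist continuous_const).rpow_const fun _ => Or.inr hα.le)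
  have := h1.tendsto x
  simpa [Real.zero_rpow hα.ne'] using this

open BoundedContinuousFunction in
/-- A Hölder continuous periodic function with zero mean is such that convex combinations of its
translates are arbitrarily small. -/
theorem exists_small_mem_convexHull_translates {α C B : ℝ} (hα : 0 < α) (hC : 0 ≤ C)
    (mt : ℝ × Euc d → ℝ) (hmb : ∀ p, |mt p| ≤ B)
    (hmper : ∀ (s : ℝ) (y z : Euc d), IsIntVec z → mt (s, y + z) = mt (s, y))
    (hmh : ∀ p p' : ℝ × Euc d, |mt p - mt p'| ≤ C * dist p p' ^ α)
    (hmmean : ∀ s : ℝ, (∫ y in unitCube d, mt (s, y)) = 0)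
    {ε : ℝ} (hε : 0 < ε) :
    ∃ g ∈ convexHull ℝ (range fun (z : Euc d) (p : ℝ × Euc d) => mt (p + (0, z))),
      ∀ p, |g p| ≤ ε := by
  have hcont : Continuous mt := continuous_of_dist_le_rpow hα hmh
  let M : Euc d → (ℝ × Euc d →ᵇ ℝ) := fun z =>
    .ofNormedAddCommGroup (fun p => mt (p + (0, z))) (by fun_prop) B fun p => hmb _
  have hMc : Continuous M := continuous_of_dist_le_rpow (C := C) hα fun z z' => by
    refine (dist_le (by positivity)).2 fun p => ?_
    have := hmh (p + (0, z)) (p + (0, z'))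
    rw [dist_add_left] at this
    simpa [M, Real.dist_eq, Prod.dist_eq] using this
  have hMi : IntegrableOn M (unitCube d) := hMc.continuousOn.integrableOn_compact isCompact_unitCube
  have hint : ∫ z in unitCube d, M z = 0 := by
    ext p
    have h1 := (evalCLM ℝ p).integral_comp_comm hMi
    have h2 := setIntegral_unitCube_add (fun y => mt (p.1, y)) (hmper p.1) p.2
    rw [hmmean] at h2
    calc (∫ z in unitCube d, M z) p = ∫ z in unitCube d, evalCLM ℝ p (M z) := h1.symm
      _ = ∫ z in unitCube d, mt (p.1, p.2 + z) := by
        refine integral_congr_ae (.of_forall fun z => ?_)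
        change mt (p.1 + 0, p.2 + z) = mt (p.1, p.2 + z)
        rw [add_zero]
      _ = 0 := h2
  have hmem : (0 : ℝ × Euc d →ᵇ ℝ) ∈ closure (convexHull ℝ (range M)) := by
    have := (convex_convexHull ℝ (range M)).set_average_mem_closure (μ := volume)
      (t := unitCube d) (f := M) (by simp [volume_unitCube]) (by simp [volume_unitCube])
      (.of_forall fun z => subset_convexHull ℝ _ (mem_range_self z)) hMi
    rwa [setAverage_eq, hint, smul_zero] at this
  obtain ⟨g, hg, hgε⟩ := Metric.mem_closure_iff.1 hmem ε hε
  refine ⟨g, ?_, fun p => ?_⟩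
  · let L : (ℝ × Euc d →ᵇ ℝ) →ₗ[ℝ] (ℝ × Euc d → ℝ) :=
      { toFun := fun g p => g p
        map_add' := fun _ _ => rfl
        map_smul' := fun _ _ => rfl }
    have h1 : L g ∈ L '' convexHull ℝ (range M) := mem_image_of_mem L hg
    rw [L.image_convexHull, ← range_comp] at h1
    exact h1
  · rw [dist_zero_left] at hgε
    exact (g.norm_coe_le_norm p).trans hgε.le

end Averaging

/-- `δ u δ` tends to zero uniformly as `δ → 0⁺`. -/
def UniformlyNegligible {E : Type*} (u : ℝ → E → ℝ) : Prop :=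
  ∀ η > 0, ∃ δ₀ > 0, ∀ δ : ℝ, 0 < δ → δ < δ₀ → ∀ p, |δ * u δ p| ≤ η

namespace UniformlyNegligible

variable {E : Type*} {u v : ℝ → E → ℝ}

theorem add (hu : UniformlyNegligible u) (hv : UniformlyNegligible v) :
    UniformlyNegligible fun δ p => u δ p + v δ p := by
  intro η hη
  obtain ⟨δ₁, h1, hu⟩ := hu (η / 2) (half_pos hη)
  obtain ⟨δ₂, h2, hv⟩ := hv (η / 2) (half_pos hη)
  refine ⟨min δ₁ δ₂, lt_min h1 h2, fun δ h0 hlt p => ?_⟩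
  rw [mul_add]
  have := hu δ h0 (hlt.trans_le (min_le_left _ _)) p
  have := hv δ h0 (hlt.trans_le (min_le_right _ _)) p
  exact (abs_add_le _ _).trans (by linarith)

theorem const_mul (k : ℝ) (hu : UniformlyNegligible u) :
    UniformlyNegligible fun δ p => k * u δ p := by
  intro η hη
  obtain ⟨δ₁, h1, hu⟩ := hu (η / (|k| + 1)) (by positivity)
  refine ⟨δ₁, h1, fun δ h0 hlt p => ?_⟩
  have h2 := hu δ h0 hlt p
  rw [le_div_iff₀ (by positivity)] at h2
  rw [mul_left_comm, abs_mul]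
  nlinarith [abs_nonneg (δ * u δ p)]

theorem comp (hu : UniformlyNegligible u) (φ : E → E) :
    UniformlyNegligible fun δ p => u δ (φ p) := by
  intro η hη
  obtain ⟨δ₁, h1, hu⟩ := hu η hη
  exact ⟨δ₁, h1, fun δ h0 hlt p => hu δ h0 hlt (φ p)⟩

end UniformlyNegligible

section Translations

variable {d : ℕ}

/-- The translations under which `δ V δ` is asymptotically invariant. -/
def asymptoticPeriods (V : ℝ → ℝ × Euc d → ℝ) : AddSubgroup (Euc d) where
  carrier := {z | UniformlyNegligible fun δ p => V δ (p + (0, z)) - V δ p}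
  zero_mem' η hη := ⟨1, one_pos, fun δ _ _ p => by
    have : p + ((0 : ℝ), (0 : Euc d)) = p := add_zero p
    simp [this, hη.le]⟩
  add_mem' := by
    intro z z' hz hz'
    have := (UniformlyNegligible.comp hz' fun p => p + (0, z)).add hz
    simpa [UniformlyNegligible, add_assoc] using this
  neg_mem' := by
    intro z hz
    have := (UniformlyNegligible.comp hz fun p => p + (0, -z)).const_mul (-1)
    have h0 : ((0 : ℝ), (0 : Euc d)) = 0 := rfl
    simpa [UniformlyNegligible, add_assoc, h0] using this

theorem mem_asymptoticPeriods {V : ℝ → ℝ × Euc d → ℝ} {z : Euc d} :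
    z ∈ asymptoticPeriods V ↔ UniformlyNegligible fun δ p => V δ (p + (0, z)) - V δ p :=
  Iff.rfl

variable {b : OrthonormalBasis (Fin d) ℝ (Euc d)} {i₀ : Fin d} {β : ℝ → ℝ}
  {mt : ℝ × Euc d → ℝ} {V : ℝ → ℝ × Euc d → ℝ}

theorem isClosed_asymptoticPeriods (hβ : ∀ s, s * β s ≤ 0)
    (hV : ∀ δ > 0, IsSol b i₀ β δ mt (V δ)) {α C : ℝ} (hα : 0 < α)
    (hmh : ∀ p p' : ℝ × Euc d, |mt p - mt p'| ≤ C * dist p p' ^ α) :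
    IsClosed (asymptoticPeriods V : Set (Euc d)) := by
  refine isClosed_of_closure_subset fun z hz η hη => ?_
  have hcont : Tendsto (fun z' : Euc d => C * dist z z' ^ α) (𝓝 z) (𝓝 0) := by
    have : Continuous fun z' : Euc d => C * dist z z' ^ α :=
      continuous_const.mul ((continuous_const.dist continuous_id).rpow_const fun _ => Or.inr hα.le)
    simpa [Real.zero_rpow hα.ne'] using this.tendsto z
  obtain ⟨z', hz'C, hz'⟩ := mem_closure_iff_nhds.1 hz _
    (hcont.eventually (gt_mem_nhds (half_pos hη)))
  obtain ⟨δ₀, h0, hδ₀⟩ := mem_asymptoticPeriods.1 hz' (η / 2) (half_pos hη)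
  refine ⟨δ₀, h0, fun δ hδ hlt p => ?_⟩
  have h1 := hδ₀ δ hδ hlt p
  have h2 := (((hV δ hδ).translate z).add (((hV δ hδ).translate z').const_mul (-1))).abs_mul_le hβ hδ
    (K := C * dist z z' ^ α) (fun p => by
      have := hmh (p + (0, z)) (p + (0, z'))
      rw [dist_add_left] at this
      simpa [Prod.dist_eq, ← sub_eq_add_neg] using this) p
  have h3 : δ * (V δ (p + (0, z)) - V δ p) = δ * (V δ (p + (0, z)) + -1 * V δ (p + (0, z'))) +
      δ * (V δ (p + (0, z')) - V δ p) := by ring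
  have hz'C : C * dist z z' ^ α < η / 2 := hz'C
  rw [h3]
  exact (abs_add_le _ _).trans (by linarith)

theorem smul_mem_asymptoticPeriods (hβ : ∀ s, s * β s ≤ 0)
    (hV : ∀ δ > 0, IsSol b i₀ β δ mt (V δ)) {K : ℝ} (hm : ∀ p, |mt p| ≤ K)
    {j : Fin d} (hj : j ≠ i₀) (t : ℝ) : t • b j ∈ asymptoticPeriods V := by
  have key : ∀ t : ℝ, 0 ≤ t → t • b j ∈ asymptoticPeriods V := by
    intro t ht η hη
    have hK : 0 ≤ K := (abs_nonneg _).trans (hm 0)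
    have hden : 0 < K * t + 1 := by positivity
    refine ⟨(η / (K * t + 1)) ^ 2, by positivity, fun δ hδ hlt p => ?_⟩
    have hsq : √δ < η / (K * t + 1) := (Real.sqrt_lt' (by positivity)).2 hlt
    rw [lt_div_iff₀ hden] at hsq
    have hs0 := Real.sqrt_nonneg δ
    set q : ℝ × Euc d := p + (t / 2) • (0, b j) with hq
    have hq1 : q + (t / 2) • (0, b j) = p + (0, t • b j) := by
      rw [hq, add_assoc, ← add_smul, add_halves]
      simp
    have hq2 : q - (t / 2) • (0, b j) = p := by rw [hq, add_sub_cancel_right]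
    have h1 := (hV δ hδ).reflection_le hβ hδ hm hj q ((by positivity : 0 ≤ t / 2))
    have h2 := ((hV δ hδ).const_mul (-1)).reflection_le hβ hδ (K := K) (by simpa using hm) hj q
      ((by positivity : 0 ≤ t / 2))
    rw [hq1, hq2] at h1 h2
    rw [abs_le]
    constructor <;> nlinarith
  rcases le_total 0 t with h | h
  · exact key t h
  · have := neg_mem (key (-t) (neg_nonneg.2 h))
    simpa using this

/-- If `b i₀` is not a multiple of an integer vector, all translations are asymptotic periods. -/
theorem asymptoticPeriods_eq_top (hβ : ∀ s, s * β s ≤ 0)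
    (hV : ∀ δ > 0, IsSol b i₀ β δ mt (V δ)) {α C K : ℝ} (hα : 0 < α)
    (hmh : ∀ p p' : ℝ × Euc d, |mt p - mt p'| ≤ C * dist p p' ^ α) (hm : ∀ p, |mt p| ≤ K)
    (hper : ∀ δ > 0, ∀ (s : ℝ) (y z : Euc d), IsIntVec z → V δ (s, y + z) = V δ (s, y))
    (hirr : ¬ RatDir (b i₀)) : asymptoticPeriods V = ⊤ := by
  set G := asymptoticPeriods V with hG
  have hint : ∀ z, IsIntVec z → z ∈ G := by
    intro z hz η hη
    refine ⟨1, one_pos, fun δ hδ _ p => ?_⟩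
    have : V δ (p + (0, z)) = V δ p := by
      have := hper δ hδ p.1 p.2 z hz
      simpa [Prod.add_def] using this
    simp [this, hη.le]
  have hperp : ∀ z : Euc d, ∑ j ∈ Finset.univ.erase i₀, ⟪b j, z⟫ • b j ∈ G := fun z =>
    sum_mem fun j hj => smul_mem_asymptoticPeriods hβ hV hm (Finset.ne_of_mem_erase hj) _
  have hsplit : ∀ z : Euc d,
      ⟪b i₀, z⟫ • b i₀ + ∑ j ∈ Finset.univ.erase i₀, ⟪b j, z⟫ • b j = z := fun z => by
    rw [Finset.add_sum_erase _ (fun j => ⟪b j, z⟫ • b j) (Finset.mem_univ i₀), b.sum_repr']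
  let φ : ℝ →+ Euc d := (LinearMap.toSpanSingleton ℝ (Euc d) (b i₀)).toAddMonoidHom
  have hφ : ∀ t, φ t = t • b i₀ := fun t => rfl
  have hcoord : ∀ k, b i₀ k ∈ G.comap φ := by
    intro k
    have h1 : EuclideanSpace.single k (1 : ℝ) ∈ G := hint _ fun i => by
      by_cases h : i = k
      · exact ⟨1, by simp [h]⟩
      · exact ⟨0, by simp [h]⟩
    have h2 := sub_mem h1 (hperp (EuclideanSpace.single k (1 : ℝ)))
    rw [← eq_sub_of_add_eq (hsplit (EuclideanSpace.single k (1 : ℝ)))] at h2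
    simpa [AddSubgroup.mem_comap, hφ, EuclideanSpace.inner_single_right] using h2
  have hclosed : IsClosed (G.comap φ : Set ℝ) := by
    have : Continuous φ := by
      change Continuous fun t : ℝ => t • b i₀
      fun_prop
    exact (isClosed_asymptoticPeriods hβ hV hα hmh).preimage this
  have htop : ∀ t, t ∈ G.comap φ := by
    rcases AddSubgroup.dense_or_cyclic (G.comap φ) with h | ⟨a, ha⟩
    · intro t
      have := h t
      rwa [hclosed.closure_eq] at this
    · refine absurd ?_ hirr
      have : ∀ k, ∃ n : ℤ, n • a = b i₀ k := fun k => by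
        have := hcoord k
        rwa [ha, AddSubgroup.mem_closure_singleton] at this
      choose n hn using this
      exact ⟨a, n, fun k => by rw [← hn k, zsmul_eq_mul, mul_comm]⟩
  rw [eq_top_iff]
  intro z _
  rw [← hsplit z]
  exact add_mem (htop _) (hperp z)

theorem uniformlyNegligible_of_small_averages (hβ : ∀ s, s * β s ≤ 0)
    (hV : ∀ δ > 0, IsSol b i₀ β δ mt (V δ)) (hG : asymptoticPeriods V = ⊤)
    (havg : ∀ ε > 0, ∃ g ∈ convexHull ℝ (range fun (z : Euc d) (p : ℝ × Euc d) =>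
      mt (p + (0, z))), ∀ p, |g p| ≤ ε) :
    UniformlyNegligible V := by
  let S : Set (ℝ × Euc d → ℝ) := {g | ∃ w : ℝ → ℝ × Euc d → ℝ,
    (∀ δ > 0, IsSol b i₀ β δ g (w δ)) ∧ UniformlyNegligible fun δ p => w δ p - V δ p}
  have hconv : Convex ℝ S := by
    rintro f ⟨w, hw, hwV⟩ g ⟨u, hu, huV⟩ k l hk hl hkl
    refine ⟨fun δ p => k * w δ p + l * u δ p,
      fun δ hδ => ((hw δ hδ).const_mul k).add ((hu δ hδ).const_mul l), ?_⟩
    convert (hwV.const_mul k).add (huV.const_mul l) using 3 with δ p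
    obtain rfl : k = 1 - l := by linarith
    ring
  have hsub : (range fun (z : Euc d) (p : ℝ × Euc d) => mt (p + (0, z))) ⊆ S := by
    rintro _ ⟨z, rfl⟩
    exact ⟨fun δ p => V δ (p + (0, z)), fun δ hδ => (hV δ hδ).translate z,
      mem_asymptoticPeriods.1 (hG ▸ AddSubgroup.mem_top z)⟩
  intro η hη
  obtain ⟨g, hg, hgε⟩ := havg (η / 2) (half_pos hη)
  obtain ⟨w, hw, hwV⟩ := convexHull_min hsub hconv hg
  obtain ⟨δ₀, h0, hδ₀⟩ := hwV (η / 2) (half_pos hη)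
  refine ⟨δ₀, h0, fun δ hδ hlt p => ?_⟩
  have h1 := hδ₀ δ hδ hlt p
  have h2 := (hw δ hδ).abs_mul_le hβ hδ hgε p
  have h3 : δ * V δ p = δ * w δ p - δ * (w δ p - V δ p) := by ring
  rw [h3]
  exact (abs_sub _ _).trans (by linarith)

end Translations

theorem StandingWave.mul_drift_nonpos {W q : ℝ → ℝ} (hW : DoubleWell W) (hq : StandingWave W q)
    (s : ℝ) : s * (2 * deriv (deriv q) s / deriv q s) ≤ 0 := by
  obtain ⟨-, -, -, -, -, -, -, -, hneg, hpos, -⟩ := hW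
  obtain ⟨-, hmono, hrange, hq0, hode, -⟩ := hq
  have hd : 0 ≤ deriv q s := hmono.monotone.deriv_nonneg
  have h : s * deriv W (q s) ≤ 0 := by
    rcases lt_trichotomy s 0 with hs | rfl | hs
    · have := hneg (q s) ⟨(hrange s).1, hq0 ▸ hmono hs⟩
      exact (mul_neg_of_neg_of_pos hs this).le
    · simp
    · have := hpos (q s) ⟨hq0 ▸ hmono hs, (hrange s).2⟩
      exact (mul_neg_of_pos_of_neg hs this).le
  rw [hode, ← mul_div_assoc]
  exact div_nonpos_of_nonpos_of_nonneg (by linarith) hd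

/-- Proposition 4.2: convergence of the penalized correctors. -/
theorem penalized_correctors_converge (d : ℕ) (hd : 2 ≤ d)
    (W q : ℝ → ℝ) (hW : DoubleWell W) (hq : StandingWave W q)
    (e : Euc d) (he : ‖e‖ = 1) (hirr : ¬ RatDir e)
    (α : ℝ) (hα : α ∈ Set.Ioo (0:ℝ) 1)
    (mt : ℝ × Euc d → ℝ)
    (hmb : ∃ B : ℝ, ∀ p, |mt p| ≤ B)
    (hmper : ∀ (s : ℝ) (y z : Euc d), IsIntVec z → mt (s, y + z) = mt (s, y))
    (hmh : ∃ C : ℝ, ∀ p p' : ℝ × Euc d, |mt p - mt p'| ≤ C * dist p p' ^ α)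
    (hmmean : ∀ s : ℝ, (∫ y in unitCube d, mt (s, y)) = 0)
    (V : ℝ → ℝ × Euc d → ℝ)
    (hV : ∀ δ > 0, (∃ B : ℝ, ∀ p, |V δ p| ≤ B) ∧ ContDiff ℝ 2 (V δ) ∧
      (∀ (s : ℝ) (y z : Euc d), IsIntVec z → V δ (s, y + z) = V δ (s, y)) ∧
      (∀ (s : ℝ) (y : Euc d),
        mt (s, y) + δ * V δ (s, y)
          - (dSS (V δ) s y + 2 * mixedDeriv e (V δ) s y + lapY (V δ) s y)
          - (2 * deriv (deriv q) s / deriv q s) * (dS (V δ) s y + ⟪e, gradY (V δ) s y⟫)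
          = 0)) :
    ∀ η > 0, ∃ δ₀ > 0, ∀ δ : ℝ, 0 < δ → δ < δ₀ →
      ∀ p : ℝ × Euc d, |δ * V δ p| ≤ η := by
  have hβ := StandingWave.mul_drift_nonpos hW hq
  obtain ⟨B, hB⟩ := hmb
  obtain ⟨C, hC⟩ := hmh
  have hC' : ∀ p p' : ℝ × Euc d, |mt p - mt p'| ≤ |C| * dist p p' ^ α := fun p p' =>
    (hC p p').trans (mul_le_mul_of_nonneg_right (le_abs_self C) (by positivity))
  let i₀ : Fin d := ⟨0, by omega⟩
  obtain ⟨b, hb⟩ := Orthonormal.exists_orthonormalBasis_extension_of_card_eq (𝕜 := ℝ)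
    (E := Euc d) (ι := Fin d) (by simp) (v := fun _ => e) (s := {i₀})
    ⟨fun _ => he, fun i j hij => absurd (Subsingleton.elim i j) hij⟩
  obtain rfl : b i₀ = e := hb i₀ rfl
  have hsol : ∀ δ > 0,
      IsSol b i₀ (fun s => 2 * deriv (deriv q) s / deriv q s) δ mt (V δ) := by
    intro δ hδ
    obtain ⟨hbd, hC2, -, heq⟩ := hV δ hδ
    refine ⟨hbd, hC2.continuous, fun p => ⟨_, _, fun i => hC2.hasJet_line p _, ?_⟩⟩
    have h := heq p.1 p.2
    rw [second_order_eq b i₀ hC2, transport_eq b i₀ (hC2.differentiable (by norm_num))] at h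
    linarith
  exact uniformlyNegligible_of_small_averages hβ hsol
    (asymptoticPeriods_eq_top hβ hsol hα.1 hC' hB (fun δ hδ => (hV δ hδ).2.2.1) hirr)
    fun ε hε => exists_small_mem_convexHull_translates hα.1 (abs_nonneg C) mt hB hmper hC'
      hmmean hε

end
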